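/- Fix u ∈ ℂ and s ∈ ℚ with s ∉ ℤ. For q ∈ (0,1) set N_q = (q^{s/2}e^{πiu} − q^{−s/2}e^{−πiu})·∏_{n=1}^∞ (1 − q^{n+s}e^{2πiu})(1 − q^{n−s}e^{−2πiu}) and D_q = (q^{s/2} − q^{−s/2})·∏_{n=1}^∞ (1 − q^{n+s})(1 − q^{n−s}); these represent the theta values θ(u + sτ) and θ(sτ) for q = e^{2πiτ}. Then D_q ≠ 0 for all sufficiently small q > 0, and N_q/D_q → e^{2πi(⌊−s⌋ + 1/2)u} as q → 0⁺, where ⌊·⌋ denotes the floor function. -/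

import Mathlib

open Complex Filter

/-- The shifted theta value `θ(u + sτ)` for real `0 < q < 1` and shift `s` (with `q = e^{2πiτ}`,
`q^s` the positive real power):
`(q^{s/2}e^{πiu} − q^{−s/2}e^{−πiu})·∏_{n≥1}(1 − q^{n+s}e^{2πiu})(1 − q^{n−s}e^{−2πiu})`. -/
noncomputable def thetaShift (s : ℝ) (q : ℝ) (u : ℂ) : ℂ :=
  (((q ^ (s / 2) : ℝ) : ℂ) * Complex.exp (Real.pi * I * u) -
      ((q ^ (-s / 2) : ℝ) : ℂ) * Complex.exp (-(Real.pi * I * u))) *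
    ∏' n : ℕ, ((1 - ((q ^ (((n : ℝ) + 1) + s) : ℝ) : ℂ) * Complex.exp (2 * Real.pi * I * u)) *
      (1 - ((q ^ (((n : ℝ) + 1) - s) : ℝ) : ℂ) * Complex.exp (-(2 * Real.pi * I * u))))

/-!
With `w = e^{2πiu}` and `(x; q)_∞ = ∏_{n≥0} (1 - x qⁿ)`, the prefactor of `θ(u + sτ)` supplies the
missing `n = 0` factor of the product, which becomes `q^{s/2} e^{πiu} (q^{1+s} w; q)_∞
(q^{-s} w⁻¹; q)_∞`. If `-1 < s < 0`, both exponents `1 + s` and `-s` are positive, so both symbols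
tend to `1` as `q → 0⁺` and `N_q / D_q → e^{πiu}`. Any other non-integral `s` is moved into this
interval by the quasi-periodicity `θ(u + (s - 1)τ) = -q^{s - 1/2} e^{2πiu} θ(u + sτ)`, each step of
which multiplies `N_q / D_q` by `e^{2πiu}`; the number of steps is `⌊-s⌋`.
-/

open scoped Topology

section QPochhammer

variable {R : Type*} [NormedCommRing R]

/-- The infinite `q`-Pochhammer symbol `(x; q)_∞ = ∏_{n ≥ 0} (1 - x qⁿ)`, from which the two halves
of the Jacobi product are built. The product converges absolutely for `‖q‖ < 1`. -/
noncomputable def qPochhammer (x q : R) : R := ∏' n : ℕ, (1 - x * q ^ n)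

@[simp]
theorem qPochhammer_zero_left (q : R) : qPochhammer 0 q = 1 := by
  simp [qPochhammer]

variable [NormOneClass R]

theorem norm_neg_mul_pow_le (x q : R) (n : ℕ) : ‖-(x * q ^ n)‖ ≤ ‖x‖ * ‖q‖ ^ n := by
  rw [norm_neg]
  exact (norm_mul_le _ _).trans (by gcongr; exact norm_pow_le q n)

variable [CompleteSpace R]

theorem multipliable_one_sub_mul_pow (x : R) {q : R} (hq : ‖q‖ < 1) :
    Multipliable fun n : ℕ => 1 - x * q ^ n := by
  have hsum : Summable fun n : ℕ => ‖-(x * q ^ n)‖ :=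
    ((summable_geometric_of_lt_one (norm_nonneg q) hq).mul_left ‖x‖).of_nonneg_of_le
      (fun _ => norm_nonneg _) (norm_neg_mul_pow_le x q)
  simpa only [sub_eq_add_neg] using multipliable_one_add_of_summable hsum

theorem qPochhammer_eq_one_sub_mul (x : R) {q : R} (hq : ‖q‖ < 1) :
    qPochhammer x q = (1 - x) * qPochhammer (q * x) q := by
  have hshift (n : ℕ) : 1 - x * q ^ (n + 1) = 1 - q * x * q ^ n := by ring
  have hmul : Multipliable fun n : ℕ => 1 - x * q ^ (n + 1) := by
    simpa only [hshift] using multipliable_one_sub_mul_pow (q * x) hq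
  rw [qPochhammer, tprod_eq_zero_mul' (f := fun n => 1 - x * q ^ n) hmul]
  simp only [qPochhammer, pow_zero, mul_one, hshift]

theorem continuousAt_qPochhammer (x : R) {q : R} (hq : ‖q‖ < 1) :
    ContinuousAt (fun p : R × R => qPochhammer p.1 p.2) (x, q) := by
  obtain ⟨r, hqr, hr⟩ := exists_between hq
  have hr0 : 0 ≤ r := (norm_nonneg q).trans hqr.le
  have hx : ∀ᶠ p : R × R in 𝓝 (x, q), ‖p.1‖ < ‖x‖ + 1 :=
    continuousAt_fst.norm.eventually_lt_const (lt_add_one _)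
  have hqr' : ∀ᶠ p : R × R in 𝓝 (x, q), ‖p.2‖ < r :=
    continuousAt_snd.norm.eventually_lt_const hqr
  have hterm (n : ℕ) : ContinuousAt (fun p : R × R => -(p.1 * p.2 ^ n)) (x, q) := by fun_prop
  have hbound : ∀ᶠ p : R × R in 𝓝 (x, q), ∀ n : ℕ,
      ‖-(p.1 * p.2 ^ n)‖ ≤ (‖x‖ + 1) * r ^ n := by
    filter_upwards [hx, hqr'] with p hp₁ hp₂ n
    exact (norm_neg_mul_pow_le _ _ n).trans (by gcongr)
  simpa only [ContinuousAt, qPochhammer, sub_eq_add_neg] using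
    tendsto_tprod_one_add_of_dominated_convergence
      ((summable_geometric_of_lt_one hr0 hr).mul_left (‖x‖ + 1)) hterm hbound

end QPochhammer

section ModifiedTheta

variable {K : Type*} [NormedField K]

/-- The modified theta function `θ(x; q) = (x; q)_∞ (q/x; q)_∞` in multiplicative notation: a
shifted theta value is `q^{s/2} e^{πiu} θ(q^{-s} e^{-2πiu}; q)`. At `x = 0`, where `q/x` is read as
`0`, it takes the value `1`. -/
noncomputable def modifiedTheta (x q : K) : K := qPochhammer x q * qPochhammer (q * x⁻¹) q

variable [CompleteSpace K]

theorem modifiedTheta_eq_one_sub_mul_tprod (x : K) {q : K} (hq : ‖q‖ < 1) :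
    modifiedTheta x q =
      (1 - x) * ∏' n : ℕ, ((1 - q ^ (n + 1) * x⁻¹) * (1 - q ^ (n + 1) * x)) := by
  have hfactor (y : K) (n : ℕ) : 1 - q ^ (n + 1) * y = 1 - q * y * q ^ n := by ring
  simp only [hfactor]
  rw [(multipliable_one_sub_mul_pow _ hq).tprod_mul (multipliable_one_sub_mul_pow _ hq),
    modifiedTheta, qPochhammer_eq_one_sub_mul x hq, qPochhammer, qPochhammer]
  ring

theorem modifiedTheta_mul_left {x q : K} (hx : x ≠ 0) (hq0 : q ≠ 0) (hq : ‖q‖ < 1) :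
    modifiedTheta (q * x) q = -x⁻¹ * modifiedTheta x q := by
  have hinv : q * (q * x)⁻¹ = x⁻¹ := by field_simp
  rw [modifiedTheta, modifiedTheta, hinv, qPochhammer_eq_one_sub_mul x⁻¹ hq,
    qPochhammer_eq_one_sub_mul x hq]
  field_simp
  ring

end ModifiedTheta

theorem tendsto_qPochhammer_rpow_mul {a : ℝ} (ha : 0 < a) (w : ℂ) :
    Tendsto (fun q : ℝ => qPochhammer ((q ^ a : ℝ) * w) (q : ℂ)) (𝓝[>] 0) (𝓝 1) := by
  have harg : Tendsto (fun q : ℝ => (((q ^ a : ℝ) : ℂ) * w, (q : ℂ))) (𝓝 0) (𝓝 (0, 0)) := by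
    have hpow := Real.continuousAt_rpow_const 0 a (.inr ha.le)
    have hcont : ContinuousAt (fun q : ℝ => (((q ^ a : ℝ) : ℂ) * w, (q : ℂ))) 0 := by fun_prop
    simpa only [Real.zero_rpow ha.ne', ofReal_zero, zero_mul] using hcont.tendsto
  have hpoch : Tendsto (fun p : ℂ × ℂ => qPochhammer p.1 p.2) (𝓝 (0, 0)) (𝓝 1) := by
    simpa using (continuousAt_qPochhammer (0 : ℂ) (q := 0) (by simp)).tendsto
  exact (hpoch.comp harg).mono_left nhdsWithin_le_nhds

theorem tendsto_modifiedTheta_rpow_mul {a : ℝ} (ha0 : 0 < a) (ha1 : a < 1) (w : ℂ) :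
    Tendsto (fun q : ℝ => modifiedTheta ((q ^ a : ℝ) * w) (q : ℂ)) (𝓝[>] 0) (𝓝 1) := by
  have hlim := (tendsto_qPochhammer_rpow_mul ha0 w).mul
    (tendsto_qPochhammer_rpow_mul (sub_pos.mpr ha1) w⁻¹)
  rw [mul_one] at hlim
  refine hlim.congr' ?_
  filter_upwards [self_mem_nhdsWithin] with q hq
  rw [modifiedTheta, Real.rpow_sub hq, Real.rpow_one, ofReal_div, mul_inv, div_eq_mul_inv,
    mul_assoc]

section ThetaShift

variable {q : ℝ}

theorem norm_ofReal_lt_one (hq : 0 < q) (hq1 : q < 1) : ‖(q : ℂ)‖ < 1 := by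
  rwa [norm_real, Real.norm_of_nonneg hq.le]

theorem ofReal_rpow_ne_zero (hq : 0 < q) (a : ℝ) : ((q ^ a : ℝ) : ℂ) ≠ 0 :=
  ofReal_ne_zero.mpr (Real.rpow_pos_of_pos hq a).ne'

theorem thetaShift_eq_mul_modifiedTheta (hq : 0 < q) (hq1 : q < 1) (s : ℝ) (u : ℂ) :
    thetaShift s q u = ((q ^ (s / 2) : ℝ) : ℂ) * exp (Real.pi * I * u) *
      modifiedTheta ((q ^ (-s) : ℝ) * exp (-(2 * Real.pi * I * u))) (q : ℂ) := by
  have hinv : (((q ^ (-s) : ℝ) : ℂ) * exp (-(2 * Real.pi * I * u)))⁻¹ =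
      ((q ^ s : ℝ) : ℂ) * exp (2 * Real.pi * I * u) := by
    rw [mul_inv, Real.rpow_neg hq.le, ofReal_inv, inv_inv, exp_neg, inv_inv]
  have hpow (n : ℕ) (a : ℝ) :
      ((q ^ ((n : ℝ) + 1 + a) : ℝ) : ℂ) = (q : ℂ) ^ (n + 1) * ((q ^ a : ℝ) : ℂ) := by
    rw [Real.rpow_add hq, ofReal_mul, ← ofReal_pow, ← Real.rpow_natCast]
    push_cast
    rfl
  have hprefactor : ((q ^ (s / 2) : ℝ) : ℂ) * exp (Real.pi * I * u) -
        ((q ^ (-s / 2) : ℝ) : ℂ) * exp (-(Real.pi * I * u)) =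
      ((q ^ (s / 2) : ℝ) : ℂ) * exp (Real.pi * I * u) *
        (1 - ((q ^ (-s) : ℝ) : ℂ) * exp (-(2 * Real.pi * I * u))) := by
    have hq' : q ^ (-s / 2) = q ^ (s / 2) * q ^ (-s) := by rw [← Real.rpow_add hq]; ring_nf
    have he : exp (-(Real.pi * I * u)) =
        exp (Real.pi * I * u) * exp (-(2 * Real.pi * I * u)) := by rw [← exp_add]; ring_nf
    rw [hq', he]
    push_cast
    ring
  rw [modifiedTheta_eq_one_sub_mul_tprod _ (norm_ofReal_lt_one hq hq1), hinv, ← mul_assoc,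
    ← hprefactor, thetaShift]
  simp only [sub_eq_add_neg _ s, hpow, mul_assoc]

theorem thetaShift_sub_one (hq : 0 < q) (hq1 : q < 1) (s : ℝ) (u : ℂ) :
    thetaShift (s - 1) q u =
      -((q ^ (s - 1 / 2) : ℝ) : ℂ) * exp (2 * Real.pi * I * u) * thetaShift s q u := by
  have hx : ((q ^ (-s) : ℝ) : ℂ) * exp (-(2 * Real.pi * I * u)) ≠ 0 :=
    mul_ne_zero (ofReal_rpow_ne_zero hq _) (exp_ne_zero _)
  have harg : ((q ^ (-(s - 1)) : ℝ) : ℂ) * exp (-(2 * Real.pi * I * u)) =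
      q * (((q ^ (-s) : ℝ) : ℂ) * exp (-(2 * Real.pi * I * u))) := by
    rw [neg_sub, sub_eq_add_neg, Real.rpow_add hq, Real.rpow_one, ofReal_mul, mul_assoc]
  have hpow : ((q ^ ((s - 1) / 2) : ℝ) : ℂ) * ((q ^ s : ℝ) : ℂ) =
      ((q ^ (s - 1 / 2) : ℝ) : ℂ) * ((q ^ (s / 2) : ℝ) : ℂ) := by
    rw [← ofReal_mul, ← ofReal_mul, ← Real.rpow_add hq, ← Real.rpow_add hq]
    ring_nf
  rw [thetaShift_eq_mul_modifiedTheta hq hq1, thetaShift_eq_mul_modifiedTheta hq hq1, harg,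
    modifiedTheta_mul_left hx (ofReal_ne_zero.mpr hq.ne') (norm_ofReal_lt_one hq hq1),
    mul_inv, Real.rpow_neg hq.le, ofReal_inv, inv_inv, exp_neg, inv_inv]
  linear_combination -(exp (Real.pi * I * u) * exp (2 * Real.pi * I * u) *
    modifiedTheta (((q ^ s : ℝ) : ℂ)⁻¹ * (exp (2 * Real.pi * I * u))⁻¹) q) * hpow

/-- The factor of automorphy `(-1)^m q^{ms - m²/2} e^{2πimu}` by which a shifted theta value is
multiplied when `s` is replaced by `s - m`. -/
noncomputable def thetaMultiplier (s q : ℝ) (u : ℂ) (m : ℤ) : ℂ :=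
  (-1) ^ m * ((q ^ (m * s - (m : ℝ) ^ 2 / 2) : ℝ) : ℂ) * exp (2 * Real.pi * I * m * u)

theorem thetaMultiplier_zero (s q : ℝ) (u : ℂ) : thetaMultiplier s q u 0 = 1 := by
  simp [thetaMultiplier]

theorem thetaMultiplier_one (s q : ℝ) (u : ℂ) :
    thetaMultiplier s q u 1 = -((q ^ (s - 1 / 2) : ℝ) : ℂ) * exp (2 * Real.pi * I * u) := by
  simp [thetaMultiplier]

theorem thetaMultiplier_ne_zero (hq : 0 < q) (s : ℝ) (u : ℂ) (m : ℤ) :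
    thetaMultiplier s q u m ≠ 0 :=
  mul_ne_zero (mul_ne_zero (zpow_ne_zero m (neg_ne_zero.mpr one_ne_zero))
    (ofReal_rpow_ne_zero hq _)) (exp_ne_zero _)

theorem thetaMultiplier_add (hq : 0 < q) (s : ℝ) (u : ℂ) (m n : ℤ) :
    thetaMultiplier s q u (m + n) =
      thetaMultiplier (s - m) q u n * thetaMultiplier s q u m := by
  have hpow : q ^ (((m + n : ℤ) : ℝ) * s - ((m + n : ℤ) : ℝ) ^ 2 / 2) =
      q ^ (n * (s - m) - (n : ℝ) ^ 2 / 2) * q ^ (m * s - (m : ℝ) ^ 2 / 2) := by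
    rw [← Real.rpow_add hq]
    push_cast
    ring_nf
  have hexp : exp (2 * Real.pi * I * (m + n : ℤ) * u) =
      exp (2 * Real.pi * I * n * u) * exp (2 * Real.pi * I * m * u) := by
    rw [← exp_add]
    push_cast
    ring_nf
  have hsign : (-1 : ℂ) ^ (m + n) = (-1) ^ n * (-1) ^ m := by
    rw [zpow_add₀ (neg_ne_zero.mpr one_ne_zero), mul_comm]
  simp only [thetaMultiplier, hpow, hexp, hsign, ofReal_mul]
  ring

theorem thetaMultiplier_div (hq : 0 < q) (s : ℝ) (u v : ℂ) (m : ℤ) :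
    thetaMultiplier s q u m / thetaMultiplier s q v m = exp (2 * Real.pi * I * m * (u - v)) := by
  have hne : (-1 : ℂ) ^ m * ((q ^ (m * s - (m : ℝ) ^ 2 / 2) : ℝ) : ℂ) ≠ 0 :=
    mul_ne_zero (zpow_ne_zero m (neg_ne_zero.mpr one_ne_zero)) (ofReal_rpow_ne_zero hq _)
  rw [thetaMultiplier, thetaMultiplier, mul_div_mul_left _ _ hne, ← exp_sub, ← mul_sub]

theorem thetaShift_sub_intCast (hq : 0 < q) (hq1 : q < 1) (s : ℝ) (u : ℂ) (m : ℤ) :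
    thetaShift (s - m) q u = thetaMultiplier s q u m * thetaShift s q u := by
  have hstep (k : ℤ) :
      thetaShift (s - (k + 1 : ℤ)) q u = thetaMultiplier s q u (k + 1) * thetaShift s q u ↔
        thetaShift (s - k) q u = thetaMultiplier s q u k * thetaShift s q u := by
    rw [thetaMultiplier_add hq, Int.cast_add, Int.cast_one, ← sub_sub, thetaShift_sub_one hq hq1,
      ← thetaMultiplier_one, mul_assoc, mul_right_inj' (thetaMultiplier_ne_zero hq _ _ _)]
  induction m using Int.induction_on with
  | zero => rw [Int.cast_zero, sub_zero, thetaMultiplier_zero, one_mul]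
  | succ n ih => exact (hstep n).mpr ih
  | pred n ih => exact (hstep (-n - 1)).mp (by rwa [sub_add_cancel])

end ThetaShift

section Limit

variable {s : ℝ}

theorem eventually_thetaShift_ne_zero_of_mem_Ioo (hs : s ∈ Set.Ioo (-1) 0) (u : ℂ) :
    ∀ᶠ q in 𝓝[>] (0 : ℝ), thetaShift s q u ≠ 0 := by
  have hlim := tendsto_modifiedTheta_rpow_mul (neg_pos.mpr hs.2) (neg_lt.mp hs.1)
    (exp (-(2 * Real.pi * I * u)))
  filter_upwards [hlim.eventually_ne one_ne_zero, Ioo_mem_nhdsGT one_pos] with q hne hq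
  rw [thetaShift_eq_mul_modifiedTheta hq.1 hq.2]
  exact mul_ne_zero (mul_ne_zero (ofReal_rpow_ne_zero hq.1 _) (exp_ne_zero _)) hne

theorem tendsto_thetaShift_div_of_mem_Ioo (hs : s ∈ Set.Ioo (-1) 0) (u v : ℂ) :
    Tendsto (fun q : ℝ => thetaShift s q u / thetaShift s q v) (𝓝[>] 0)
      (𝓝 (exp (Real.pi * I * (u - v)))) := by
  have hlim (z : ℂ) := tendsto_modifiedTheta_rpow_mul (neg_pos.mpr hs.2) (neg_lt.mp hs.1)
    (exp (-(2 * Real.pi * I * z)))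
  have hdiv := ((hlim u).div (hlim v) one_ne_zero).const_mul (exp (Real.pi * I * (u - v)))
  rw [div_one, mul_one] at hdiv
  refine hdiv.congr' ?_
  filter_upwards [Ioo_mem_nhdsGT one_pos] with q hq
  rw [thetaShift_eq_mul_modifiedTheta hq.1 hq.2, thetaShift_eq_mul_modifiedTheta hq.1 hq.2,
    mul_div_mul_comm, mul_div_mul_left _ _ (ofReal_rpow_ne_zero hq.1 _), ← exp_sub, ← mul_sub,
    Pi.div_apply]

theorem exists_mem_Ioo_eq_sub_floor_neg (hs : ∀ m : ℤ, s ≠ m) :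
    ∃ t ∈ Set.Ioo (-1 : ℝ) 0, s = t - ⌊-s⌋ := by
  have hpos : 0 < Int.fract (-s) :=
    Int.fract_pos.mpr fun h => hs (-⌊-s⌋) (by rw [Int.cast_neg, ← h, neg_neg])
  refine ⟨-Int.fract (-s), ⟨neg_lt_neg (Int.fract_lt_one _), neg_lt_zero.mpr hpos⟩, ?_⟩
  linarith [Int.fract_add_floor (-s)]

theorem eventually_thetaShift_ne_zero (hs : ∀ m : ℤ, s ≠ m) (u : ℂ) :
    ∀ᶠ q in 𝓝[>] (0 : ℝ), thetaShift s q u ≠ 0 := by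
  obtain ⟨t, ht, hst⟩ := exists_mem_Ioo_eq_sub_floor_neg hs
  filter_upwards [eventually_thetaShift_ne_zero_of_mem_Ioo ht u, Ioo_mem_nhdsGT one_pos]
    with q hne hq
  rw [hst, thetaShift_sub_intCast hq.1 hq.2]
  exact mul_ne_zero (thetaMultiplier_ne_zero hq.1 _ _ _) hne

theorem tendsto_thetaShift_div (hs : ∀ m : ℤ, s ≠ m) (u v : ℂ) :
    Tendsto (fun q : ℝ => thetaShift s q u / thetaShift s q v) (𝓝[>] 0)
      (𝓝 (exp (2 * Real.pi * I * (⌊-s⌋ + 1 / 2) * (u - v)))) := by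
  obtain ⟨t, ht, hst⟩ := exists_mem_Ioo_eq_sub_floor_neg hs
  generalize ⌊-s⌋ = m at hst ⊢
  have hexp : exp (2 * Real.pi * I * (m + 1 / 2) * (u - v)) =
      exp (2 * Real.pi * I * m * (u - v)) * exp (Real.pi * I * (u - v)) := by
    rw [← exp_add]
    ring_nf
  rw [hexp]
  refine ((tendsto_thetaShift_div_of_mem_Ioo ht u v).const_mul _).congr' ?_
  filter_upwards [Ioo_mem_nhdsGT one_pos] with q hq
  rw [hst, thetaShift_sub_intCast hq.1 hq.2, thetaShift_sub_intCast hq.1 hq.2, mul_div_mul_comm,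
    thetaMultiplier_div hq.1]

end Limit

theorem stmt17_general (u : ℂ) (s : ℝ) (hs : ∀ m : ℤ, s ≠ m) :
    (∀ᶠ q in 𝓝[>] (0 : ℝ), thetaShift s q 0 ≠ 0) ∧
    Tendsto (fun q : ℝ => thetaShift s q u / thetaShift s q 0) (𝓝[>] 0)
      (𝓝 (exp (2 * Real.pi * I * (⌊-s⌋ + 1 / 2) * u))) :=
  ⟨eventually_thetaShift_ne_zero hs 0, by simpa only [sub_zero] using tendsto_thetaShift_div hs u 0⟩

/-- for fixed `u ∈ ℂ` and `s ∈ ℚ ∖ ℤ`, with `N_q = θ(u+sτ)` and `D_q = θ(sτ)`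
(as above), `D_q ≠ 0` for all sufficiently small `q > 0`, and
`N_q/D_q → e^{2πi(⌊−s⌋+1/2)u}` as `q → 0⁺`. -/
theorem stmt17 (u : ℂ) (s : ℚ) (hs : ∀ m : ℤ, s ≠ (m : ℚ)) :
    (∀ᶠ q in nhdsWithin (0 : ℝ) (Set.Ioi 0), thetaShift (s : ℝ) q 0 ≠ 0) ∧
    Tendsto (fun q : ℝ => thetaShift (s : ℝ) q u / thetaShift (s : ℝ) q 0)
      (nhdsWithin (0 : ℝ) (Set.Ioi 0))
      (nhds (Complex.exp (2 * Real.pi * I * (((⌊-s⌋ : ℤ) : ℂ) + 1 / 2) * u))) := by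
  rw [← Rat.floor_cast (α := ℝ) (-s), Rat.cast_neg]
  exact stmt17_general u s fun m => mod_cast hs m
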